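/- Let X = Σ_{i=1}^n Rᵢ ∂/∂xᵢ be a polynomial vector field of degree at most one defined on S_{p,q}, with Rᵢ = Σ_{j=1}^n c_{ij} xⱼ + c_{i0}, and suppose the matrix A = (c_{ij})_{1≤i,j≤p+1} is nonzero. Then the set of nonzero vectors (a₁,…,a_{p+1}) ∈ ℝ^{p+1} whose associated meridian {a₁x₁ + ⋯ + a_{p+1}x_{p+1} = 0} is invariant for X spans a linear subspace of ℝ^{p+1} of dimension at most p − 1; in particular, X has at most p − 1 linearly independent invariant meridians. -/

import Mathlib

open MvPolynomial

/-- The first `p+1` coordinates of `Fin (p+q+1)`, corresponding to `x₁, …, x_{p+1}`. -/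
def idx1 (p q : ℕ) (i : Fin (p+1)) : Fin (p+q+1) := Fin.castLE (by omega) i

/-- The last `q` coordinates of `Fin (p+q+1)`, corresponding to `x_{p+2}, …, x_n`. -/
def idx2 (p q : ℕ) (j : Fin q) : Fin (p+q+1) := ⟨p+1+(j:ℕ), by omega⟩

/-- The polynomial `h = (x₁² + ⋯ + x_{p+1}² − a²)² + x_{p+2}² + ⋯ + x_n² − 1`
whose zero set is `S_{p,q}`. -/
noncomputable def hpq (p q : ℕ) (a : ℝ) : MvPolynomial (Fin (p+q+1)) ℝ :=
  ((∑ i : Fin (p+1), X (idx1 p q i) ^ 2) - C (a^2))^2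
    + (∑ j : Fin q, X (idx2 p q j) ^ 2) - 1

/-!
A vector field tangent to `S_{p,q}` restricts on the plane `x_{p+2} = ⋯ = x_n = 0` to a field `F`
with `⟨u, F u⟩ = 0` on the sphere `⟨u, u⟩ = a² + 1`: there `h` vanishes with a nonzero radial
gradient. If `F u = A u + b`, comparing `u` with `-u` separates the two terms, so `b = 0` and `A` is
skew-symmetric. Invariance of the meridian of `v` says that `⟨v, A u⟩ = 0` whenever `⟨v, u⟩ = 0`;
the choice `u = A v` gives `⟨A v, A v⟩ = 0`. Thus the invariant meridians lie in the kernel of `A`,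
whose codimension is at least two since a nonzero alternating matrix has a nonzero `2 × 2` minor.
-/

section Sphere

open Matrix

lemma exists_smul_dotProduct_self_eq {m : Type*} [Fintype m] {ρ : ℝ} (hρ : 0 < ρ) {u : m → ℝ}
    (hu : u ≠ 0) : ∃ t : ℝ, t ≠ 0 ∧ (t • u) ⬝ᵥ (t • u) = ρ := by
  have hpos : 0 < u ⬝ᵥ u := by simpa using dotProduct_star_self_pos_iff.2 hu
  refine ⟨√(ρ / (u ⬝ᵥ u)), by positivity, ?_⟩
  rw [smul_dotProduct, dotProduct_smul, smul_smul, Real.mul_self_sqrt (by positivity), smul_eq_mul,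
    div_mul_cancel₀ _ hpos.ne']

lemma isAlt_and_eq_zero_of_tangent_sphere {m : Type*} [Fintype m] [DecidableEq m]
    {A : Matrix m m ℝ} {b : m → ℝ} {ρ : ℝ} (hρ : 0 < ρ)
    (h : ∀ u, u ⬝ᵥ u = ρ → u ⬝ᵥ (A *ᵥ u + b) = 0) : A.toBilin'.IsAlt ∧ b = 0 := by
  have on_sphere (u : m → ℝ) (hu : u ⬝ᵥ u = ρ) : u ⬝ᵥ A *ᵥ u = 0 ∧ u ⬝ᵥ b = 0 := by
    have at_pos := h u hu
    have at_neg := h (-u) (by simpa using hu)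
    simp only [mulVec_neg, neg_dotProduct, dotProduct_add, dotProduct_neg] at at_pos at_neg
    constructor <;> linarith
  have everywhere (u : m → ℝ) : u ⬝ᵥ A *ᵥ u = 0 ∧ u ⬝ᵥ b = 0 := by
    rcases eq_or_ne u 0 with rfl | hu
    · simp
    obtain ⟨t, ht, htu⟩ := exists_smul_dotProduct_self_eq hρ hu
    simpa [mulVec_smul, ht] using on_sphere (t • u) htu
  exact ⟨fun u ↦ by simpa [toBilin'_apply'] using (everywhere u).1,
    dotProduct_self_eq_zero.1 (everywhere b).2⟩

end Sphere

section AlternatingMatrix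

open Matrix

variable {m 𝕜 : Type*} [Fintype m] [DecidableEq m]

lemma two_le_rank_of_isAlt [Field 𝕜] {A : Matrix m m 𝕜} (hA : A.toBilin'.IsAlt) (hA0 : A ≠ 0) :
    2 ≤ A.rank := by
  have diag_eq_zero (i : m) : A i i = 0 := by simpa using hA (Pi.single i 1)
  have skew (i j : m) : A j i = -A i j := by
    simpa using (hA.neg_eq (Pi.single i 1) (Pi.single j 1)).symm
  obtain ⟨i, j, hij⟩ : ∃ i j, A i j ≠ 0 := by
    by_contra! h
    exact hA0 (Matrix.ext h)
  have minor_ne_zero : (A.submatrix ![i, j] ![i, j]).det ≠ 0 := by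
    rw [det_fin_two]
    simpa [diag_eq_zero, skew i j] using hij
  calc 2 = (A.submatrix ![i, j] ![i, j]).rank := by
        rw [rank_of_isUnit _ ((isUnit_iff_isUnit_det _).2 minor_ne_zero.isUnit), Fintype.card_fin]
    _ ≤ A.rank := rank_submatrix_le A _ _

lemma finrank_ker_mulVecLin_add_two_le [Field 𝕜] {A : Matrix m m 𝕜} (hA : A.toBilin'.IsAlt)
    (hA0 : A ≠ 0) : Module.finrank 𝕜 A.mulVecLin.ker + 2 ≤ Fintype.card m := by
  have rank_nullity := A.mulVecLin.finrank_range_add_finrank_ker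
  rw [Module.finrank_fintype_fun_eq_card] at rank_nullity
  have two_le_rank : 2 ≤ Module.finrank 𝕜 A.mulVecLin.range := two_le_rank_of_isAlt hA hA0
  lia

lemma mulVec_eq_zero_of_isAlt [CommRing 𝕜] [LinearOrder 𝕜] [IsStrictOrderedRing 𝕜]
    {A : Matrix m m 𝕜} (hA : A.toBilin'.IsAlt) {v : m → 𝕜}
    (hv : ∀ u, v ⬝ᵥ u = 0 → v ⬝ᵥ A *ᵥ u = 0) : A *ᵥ v = 0 := by
  have hAv : v ⬝ᵥ A *ᵥ v = 0 := by simpa [toBilin'_apply'] using hA v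
  rw [← dotProduct_self_eq_zero]
  calc A *ᵥ v ⬝ᵥ A *ᵥ v = -(v ⬝ᵥ A *ᵥ (A *ᵥ v)) := by
        simpa only [toBilin'_apply'] using (hA.neg_eq v (A *ᵥ v)).symm
    _ = 0 := by rw [hv _ hAv, neg_zero]

end AlternatingMatrix

lemma mkDerivation_eq_sum_mul_pderiv {σ 𝕜 : Type*} [Fintype σ] [CommSemiring 𝕜]
    (R : σ → MvPolynomial σ 𝕜) (f : MvPolynomial σ 𝕜) :
    mkDerivation 𝕜 R f = ∑ i, R i * pderiv i f := by
  classical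
  have sum_apply (g : MvPolynomial σ 𝕜) :
      (∑ i, R i • pderiv (R := 𝕜) i) g = ∑ i, R i * pderiv i g := by
    rw [← Derivation.coeFnAddMonoidHom_apply, map_sum, Finset.sum_apply]
    rfl
  have eq_sum : mkDerivation 𝕜 R = ∑ i, R i • pderiv i :=
    derivation_ext fun j ↦ by simp [sum_apply, mkDerivation_X, pderiv_X, Pi.single_apply]
  rw [eq_sum, sum_apply]

lemma sum_mul_pderiv_hpq (p q : ℕ) (a : ℝ)
    (R : Fin (p + q + 1) → MvPolynomial (Fin (p + q + 1)) ℝ) :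
    ∑ i, R i * pderiv i (hpq p q a) =
      4 * ((∑ k, X (idx1 p q k) ^ 2) - C (a ^ 2)) * ∑ k, X (idx1 p q k) * R (idx1 p q k) +
        2 * ∑ j, X (idx2 p q j) * R (idx2 p q j) := by
  rw [← mkDerivation_eq_sum_mul_pderiv, hpq]
  simp only [map_add, map_sub, map_sum, Derivation.leibniz_pow, mkDerivation_X, derivation_C,
    Derivation.map_one_eq_zero, smul_eq_mul, nsmul_eq_mul, Nat.add_one_sub_one, pow_one,
    Nat.cast_ofNat, ← Finset.mul_sum]
  ring

section Slice

open Matrix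

variable {p q : ℕ}

lemma idx1_injective : Function.Injective (idx1 p q) :=
  Fin.castLE_injective (by lia)

lemma idx1_ne_idx2 (k : Fin (p + 1)) (j : Fin q) : idx1 p q k ≠ idx2 p q j :=
  Fin.ne_of_val_ne (by simp only [idx1, idx2, Fin.val_castLE]; lia)

/-- The point `(u, 0)` of the plane `x_{p+2} = ⋯ = x_n = 0`, on which `h` is a function of `⟨u, u⟩`
alone. -/
noncomputable def slicePoint (q : ℕ) (u : Fin (p + 1) → ℝ) : Fin (p + q + 1) → ℝ :=
  Function.extend (idx1 p q) u 0

@[simp]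
lemma slicePoint_idx1 (u : Fin (p + 1) → ℝ) (k : Fin (p + 1)) :
    slicePoint q u (idx1 p q k) = u k :=
  idx1_injective.extend_apply u _ k

@[simp]
lemma slicePoint_idx2 (u : Fin (p + 1) → ℝ) (j : Fin q) : slicePoint q u (idx2 p q j) = 0 :=
  Function.extend_apply' u _ _ fun ⟨k, hk⟩ ↦ idx1_ne_idx2 k j hk

lemma sum_mul_slicePoint (b : Fin (p + q + 1) → ℝ) (u : Fin (p + 1) → ℝ) :
    ∑ i, b i * slicePoint q u i = ∑ k, b (idx1 p q k) * u k := by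
  refine (Fintype.sum_of_injective (idx1 p q) idx1_injective _ _ (fun i hi ↦ ?_) fun k ↦ ?_).symm
  · rw [slicePoint, Function.extend_apply' u _ i hi, Pi.zero_apply, mul_zero]
  · rw [slicePoint_idx1]

/-- The first `p + 1` components of the vector field `∑ Rᵢ ∂/∂xᵢ` along the plane
`x_{p+2} = ⋯ = x_n = 0`, as a map from `ℝ^{p+1}` to itself. -/
noncomputable def sliceField (R : Fin (p + q + 1) → MvPolynomial (Fin (p + q + 1)) ℝ)
    (u : Fin (p + 1) → ℝ) : Fin (p + 1) → ℝ :=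
  fun k ↦ eval (slicePoint q u) (R (idx1 p q k))

/-- The nonzero vectors `v` whose meridian `{∑ vₖ xₖ = 0}` is invariant for the vector field
`∑ Rᵢ ∂/∂xᵢ`. -/
def invariantMeridians (R : Fin (p + q + 1) → MvPolynomial (Fin (p + q + 1)) ℝ) :
    Set (Fin (p + 1) → ℝ) :=
  {v | v ≠ 0 ∧ ∃ K' : MvPolynomial (Fin (p + q + 1)) ℝ,
    ∑ k, C (v k) * R (idx1 p q k) = K' * ∑ k, C (v k) * X (idx1 p q k)}

variable {R : Fin (p + q + 1) → MvPolynomial (Fin (p + q + 1)) ℝ}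

lemma dotProduct_sliceField_eq_zero_of_mem_invariantMeridians {u v : Fin (p + 1) → ℝ}
    (hv : v ∈ invariantMeridians R) (hvu : v ⬝ᵥ u = 0) : v ⬝ᵥ sliceField R u = 0 := by
  obtain ⟨-, K', hK'⟩ := hv
  have h := congrArg (eval (slicePoint q u)) hK'
  simp only [map_sum, map_mul, eval_C, eval_X, slicePoint_idx1] at h
  calc v ⬝ᵥ sliceField R u = eval (slicePoint q u) K' * (v ⬝ᵥ u) := h
    _ = 0 := by rw [hvu, mul_zero]

lemma dotProduct_sliceField_eq_zero_of_tangent {a : ℝ} {K : MvPolynomial (Fin (p + q + 1)) ℝ}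
    (hinv : ∑ i, R i * pderiv i (hpq p q a) = K * hpq p q a) {u : Fin (p + 1) → ℝ}
    (hu : (u ⬝ᵥ u - a ^ 2) ^ 2 = 1) : u ⬝ᵥ sliceField R u = 0 := by
  have sum_sq : ∑ k, u k ^ 2 = u ⬝ᵥ u := by simp only [dotProduct, sq]
  have hpq_eq_zero : eval (slicePoint q u) (hpq p q a) = 0 := by simp [hpq, sum_sq, hu]
  have radial : 4 * (u ⬝ᵥ u - a ^ 2) * (u ⬝ᵥ sliceField R u) = 0 := by
    calc 4 * (u ⬝ᵥ u - a ^ 2) * (u ⬝ᵥ sliceField R u)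
        = eval (slicePoint q u) (∑ i, R i * pderiv i (hpq p q a)) := by
          rw [sum_mul_pderiv_hpq]
          simp [sum_sq, dotProduct, sliceField]
      _ = 0 := by rw [hinv, map_mul, hpq_eq_zero, mul_zero]
  have level_ne_zero : u ⬝ᵥ u - a ^ 2 ≠ 0 := fun h ↦ by simp [h] at hu
  exact (mul_eq_zero.1 radial).resolve_left (mul_ne_zero four_ne_zero level_ne_zero)

lemma sliceField_eq_mulVec_add {c : Fin (p + 1) → Fin (p + q + 1) → ℝ} {c0 : Fin (p + 1) → ℝ}
    (hR : ∀ k, R (idx1 p q k) = (∑ j, C (c k j) * X j) + C (c0 k)) (u : Fin (p + 1) → ℝ) :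
    sliceField R u = (Matrix.of fun k l ↦ c k (idx1 p q l)) *ᵥ u + c0 := by
  ext k
  simp [sliceField, hR, sum_mul_slicePoint, mulVec, dotProduct]

end Slice

theorem stmt10_general {p q : ℕ} {a : ℝ}
    {R : Fin (p + q + 1) → MvPolynomial (Fin (p + q + 1)) ℝ}
    {c : Fin (p + 1) → Fin (p + q + 1) → ℝ} {c0 : Fin (p + 1) → ℝ}
    (hR : ∀ k, R (idx1 p q k) = (∑ j, C (c k j) * X j) + C (c0 k))
    {K : MvPolynomial (Fin (p + q + 1)) ℝ}
    (hinv : ∑ i, R i * pderiv i (hpq p q a) = K * hpq p q a)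
    (hA : (Matrix.of fun k l ↦ c k (idx1 p q l)) ≠ 0) :
    Module.finrank ℝ (Submodule.span ℝ (invariantMeridians R)) < p := by
  set A := Matrix.of fun k l ↦ c k (idx1 p q l)
  have hslice := sliceField_eq_mulVec_add hR
  obtain ⟨hAlt, rfl⟩ : A.toBilin'.IsAlt ∧ c0 = 0 :=
    isAlt_and_eq_zero_of_tangent_sphere (ρ := a ^ 2 + 1) (by positivity) fun u hu ↦
      hslice u ▸ dotProduct_sliceField_eq_zero_of_tangent hinv (by rw [hu]; ring)
  have span_le_ker : Submodule.span ℝ (invariantMeridians R) ≤ A.mulVecLin.ker := by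
    refine Submodule.span_le.2 fun v hv ↦ mulVec_eq_zero_of_isAlt hAlt fun u hvu ↦ ?_
    simpa only [hslice, add_zero] using
      dotProduct_sliceField_eq_zero_of_mem_invariantMeridians hv hvu
  have finrank_le := Submodule.finrank_mono span_le_ker
  have finrank_ker_le := finrank_ker_mulVecLin_add_two_le hAlt hA
  rw [Fintype.card_fin] at finrank_ker_le
  lia

/-- For a degree-one vector field `X = Σ Rᵢ ∂/∂xᵢ` defined on `S_{p,q}`, with
`Rᵢ = Σⱼ c_{ij}xⱼ + c_{i0}` and nonzero matrix `A = (c_{ij})_{1≤i,j≤p+1}`, the set of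
nonzero vectors `(a₁,…,a_{p+1})` whose meridian `{a₁x₁ + ⋯ + a_{p+1}x_{p+1} = 0}` is
invariant for `X` spans a subspace of `ℝ^{p+1}` of dimension at most `p − 1`:
`X` has at most `p − 1` linearly independent invariant meridians. -/
theorem stmt10 (p q : ℕ) (hp : 1 ≤ p) (hq : 1 ≤ q) (a : ℝ) (ha : 1 < a)
    (R : Fin (p+q+1) → MvPolynomial (Fin (p+q+1)) ℝ)
    (c : Fin (p+q+1) → Fin (p+q+1) → ℝ) (c0 : Fin (p+q+1) → ℝ)
    (hR : ∀ i, R i = (∑ j, C (c i j) * X j) + C (c0 i))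
    (K : MvPolynomial (Fin (p+q+1)) ℝ)
    (hinv : (∑ i, R i * pderiv i (hpq p q a)) = K * hpq p q a)
    (hA : (Matrix.of fun i j : Fin (p+1) => c (idx1 p q i) (idx1 p q j)) ≠ 0) :
    Module.finrank ℝ
      ↥(Submodule.span ℝ {av : Fin (p+1) → ℝ | av ≠ 0 ∧
        ∃ K' : MvPolynomial (Fin (p+q+1)) ℝ,
          (∑ i : Fin (p+1), C (av i) * R (idx1 p q i))
            = K' * (∑ i : Fin (p+1), C (av i) * X (idx1 p q i))}) ≤ p - 1 :=
  Nat.le_sub_one_of_lt (stmt10_general (fun k ↦ hR (idx1 p q k)) hinv hA)
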